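/- Let B be a finite-dimensional vector space over a field K of characteristic zero equipped with a skew-symmetric bilinear product [·,·]_B, let B* be its dual, define ad*(b)(β) = −β([b,·]_B), and let w : B × B → B* be a bilinear map. Define on B ⊕ B* the product [b+β, b'+β'] = [b,b']_B + w(b,b') + ad*(b)(β') − ad*(b')(β). Then this product makes B ⊕ B* a Lie algebra (i.e. it is skew-symmetric and satisfies the Jacobi identity) if and only if [·,·]_B makes B a Lie algebra and w is a 2-cocycle, i.e. w is skew-symmetric and w([a,b]_B,c) + w([b,c]_B,a) + w([c,a]_B,b) = ad*(a)(w(b,c)) + ad*(b)(w(c,a)) + ad*(c)(w(a,b)) for all a,b,c ∈ B. -/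

import Mathlib

open Module

variable {K B : Type*}

/-- The product `[b+β, b'+β'] = [b,b']_B + w(b,b') + ad*(b)(β') − ad*(b')(β)` on
`B ⊕ B*`, where `ad*(b)(β) = −β ∘ [b,·]_B` is the coadjoint action relative to the
bilinear product `m` on `B`. -/
def tStarBr [Field K] [AddCommGroup B] [Module K B]
    (m : B →ₗ[K] B →ₗ[K] B) (w : B →ₗ[K] B →ₗ[K] Module.Dual K B)
    (X Y : B × Module.Dual K B) : B × Module.Dual K B :=
  (m X.1 Y.1, w X.1 Y.1 + (-(Y.2 ∘ₗ m X.1)) - (-(X.2 ∘ₗ m Y.1)))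

/-!
The product is the abelian extension bracket attached to a representation `ρ` of `B` and a map
`w : B × B → V`, for `V = B*` and `ρ = ad*`. In the Jacobi sum of three elements of `B ⊕ V`, the
`V`-component separates into a term depending only on the `B`-components, whose vanishing is the
cocycle identity of a skew-symmetric `w`, and terms each linear in one of the `V`-components, which
vanish iff `ρ` preserves brackets. For `ρ = ad*` the latter follows from the Jacobi identity of `B`.
-/

section Bracket

variable {R L V : Type*} [CommRing R] [AddCommGroup L] [Module R L] [AddCommGroup V] [Module R V]

/-- The cyclic sum whose vanishing is the Jacobi identity of the bilinear product `m`. -/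
def jacobiator (m : L →ₗ[R] L →ₗ[R] L) (x y z : L) : L :=
  m x (m y z) + m y (m z x) + m z (m x y)

/-- The bilinear product `m` makes `L` a Lie algebra. Skew-symmetry is encoded as
`m x y = -m y x`, which may be weaker than `m x x = 0` when `2` is not cancellable in `L`. -/
structure IsLieBracket (m : L →ₗ[R] L →ₗ[R] L) : Prop where
  skew : ∀ x y, m x y = -m y x
  jacobi : ∀ x y z, jacobiator m x y z = 0

/-- The action `ρ` on `V` turns the product `m` into the commutator of endomorphisms, i.e. it is
a representation of `(L, m)`. -/
def IsRepresentation (m : L →ₗ[R] L →ₗ[R] L) (ρ : L →ₗ[R] Module.End R V) : Prop :=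
  ∀ a b, ρ (m a b) = ⁅ρ a, ρ b⁆

/-- The bilinear map `w` is a 2-cocycle of `(L, m)` with values in `V`, on which `L` acts by `ρ`. -/
structure IsTwoCocycle (m : L →ₗ[R] L →ₗ[R] L) (ρ : L →ₗ[R] Module.End R V)
    (w : L →ₗ[R] L →ₗ[R] V) : Prop where
  skew : ∀ a b, w a b = -w b a
  cocycle : ∀ a b c,
    w (m a b) c + w (m b c) a + w (m c a) b = ρ a (w b c) + ρ b (w c a) + ρ c (w a b)

/-- The Chevalley–Eilenberg differential of the 2-cochain `w`. The terms `-w (m a b) c` are written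
as `w c (m a b)`, the form in which they occur in a Jacobi sum also when `w` is not skew. -/
def cochainDifferential (m : L →ₗ[R] L →ₗ[R] L) (ρ : L →ₗ[R] Module.End R V)
    (w : L →ₗ[R] L →ₗ[R] V) (a b c : L) : V :=
  ρ a (w b c) + ρ b (w c a) + ρ c (w a b) + (w a (m b c) + w b (m c a) + w c (m a b))

/-- The product on `L ⊕ V` of the abelian extension of `(L, m)` by `V` given by the action `ρ`
and the map `w`. -/
def extensionBracket (m : L →ₗ[R] L →ₗ[R] L) (ρ : L →ₗ[R] Module.End R V)
    (w : L →ₗ[R] L →ₗ[R] V) : L × V →ₗ[R] L × V →ₗ[R] L × V :=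
  LinearMap.mk₂ R (fun X Y ↦ (m X.1 Y.1, w X.1 Y.1 + ρ X.1 Y.2 - ρ Y.1 X.2))
    (fun X X' Y ↦ Prod.ext (by simp) (by
      simp only [Prod.fst_add, Prod.snd_add, map_add, LinearMap.add_apply]; abel))
    (fun r X Y ↦ by ext <;> simp [smul_add, smul_sub])
    (fun X Y Y' ↦ Prod.ext (by simp) (by
      simp only [Prod.fst_add, Prod.snd_add, map_add, LinearMap.add_apply]; abel))
    (fun r X Y ↦ by ext <;> simp [smul_add, smul_sub])

variable {m : L →ₗ[R] L →ₗ[R] L} {ρ : L →ₗ[R] Module.End R V} {w : L →ₗ[R] L →ₗ[R] V}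

theorem extensionBracket_apply (X Y : L × V) :
    extensionBracket m ρ w X Y = (m X.1 Y.1, w X.1 Y.1 + ρ X.1 Y.2 - ρ Y.1 X.2) :=
  rfl

theorem extensionBracket_skew_iff :
    (∀ X Y, extensionBracket m ρ w X Y = -extensionBracket m ρ w Y X) ↔
      (∀ a b, m a b = -m b a) ∧ ∀ a b, w a b = -w b a := by
  refine ⟨fun h ↦ ?_, fun ⟨hm, hw⟩ X Y ↦ ?_⟩
  · have on_base (a b : L) : m a b = -m b a ∧ w a b = -w b a := by
      simpa [extensionBracket_apply] using h (a, 0) (b, 0)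
    exact ⟨fun a b ↦ (on_base a b).1, fun a b ↦ (on_base a b).2⟩
  · refine Prod.ext (hm X.1 Y.1) ?_
    simp only [extensionBracket_apply, Prod.snd_neg, hw X.1 Y.1]
    abel

theorem jacobiator_extensionBracket (a b c : L) (α β γ : V) :
    jacobiator (extensionBracket m ρ w) (a, α) (b, β) (c, γ) =
      (jacobiator m a b c,
        cochainDifferential m ρ w a b c +
          ((⁅ρ b, ρ c⁆ - ρ (m b c)) α + (⁅ρ c, ρ a⁆ - ρ (m c a)) β +
            (⁅ρ a, ρ b⁆ - ρ (m a b)) γ)) := by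
  refine Prod.ext rfl ?_
  simp only [jacobiator, cochainDifferential, extensionBracket_apply, Prod.snd_add, map_add,
    map_sub, LinearMap.sub_apply, Ring.lie_def, Module.End.mul_apply]
  abel

theorem extensionBracket_jacobi_iff :
    (∀ X Y Z, jacobiator (extensionBracket m ρ w) X Y Z = 0) ↔
      (∀ a b c, jacobiator m a b c = 0) ∧ IsRepresentation m ρ ∧
        ∀ a b c, cochainDifferential m ρ w a b c = 0 := by
  refine ⟨fun h ↦ ?_, fun ⟨hm, hρ, hw⟩ ⟨a, α⟩ ⟨b, β⟩ ⟨c, γ⟩ ↦ ?_⟩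
  · have on_base (a b c : L) : jacobiator m a b c = 0 ∧ cochainDifferential m ρ w a b c = 0 := by
      simpa only [jacobiator_extensionBracket, map_zero, add_zero, Prod.mk_eq_zero]
        using h (a, 0) (b, 0) (c, 0)
    have hρ (a b : L) (γ : V) : (⁅ρ a, ρ b⁆ - ρ (m a b)) γ = 0 := by
      simpa only [jacobiator_extensionBracket, map_zero, add_zero, zero_add, Prod.mk_eq_zero,
        (on_base a b 0).2, Prod.snd_zero] using congrArg Prod.snd (h (a, 0) (b, 0) (0, γ))
    exact ⟨fun a b c ↦ (on_base a b c).1,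
      fun a b ↦ (sub_eq_zero.mp (LinearMap.ext (hρ a b))).symm, fun a b c ↦ (on_base a b c).2⟩
  · simp only [jacobiator_extensionBracket, hm, hw, hρ _ _, sub_self, LinearMap.zero_apply,
      add_zero, Prod.mk_zero_zero]

theorem isTwoCocycle_iff_cochainDifferential_eq_zero :
    IsTwoCocycle m ρ w ↔
      (∀ a b, w a b = -w b a) ∧ ∀ a b c, cochainDifferential m ρ w a b c = 0 := by
  have differential_eq (hw : ∀ a b, w a b = -w b a) (a b c : L) :
      cochainDifferential m ρ w a b c = ρ a (w b c) + ρ b (w c a) + ρ c (w a b) -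
        (w (m a b) c + w (m b c) a + w (m c a) b) := by
    rw [cochainDifferential, hw a (m b c), hw b (m c a), hw c (m a b)]
    abel
  refine ⟨fun h ↦ ⟨h.skew, fun a b c ↦ ?_⟩, fun ⟨hw, h⟩ ↦ ⟨hw, fun a b c ↦ ?_⟩⟩
  · rw [differential_eq h.skew, h.cocycle, sub_self]
  · exact (sub_eq_zero.mp (differential_eq hw a b c ▸ h a b c)).symm

theorem isLieBracket_extensionBracket_iff :
    IsLieBracket (extensionBracket m ρ w) ↔
      IsLieBracket m ∧ IsRepresentation m ρ ∧ IsTwoCocycle m ρ w := by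
  rw [isTwoCocycle_iff_cochainDifferential_eq_zero]
  constructor
  · intro h
    obtain ⟨hm, hw⟩ := extensionBracket_skew_iff.mp h.skew
    obtain ⟨hJ, hρ, hc⟩ := extensionBracket_jacobi_iff.mp h.jacobi
    exact ⟨⟨hm, hJ⟩, hρ, hw, hc⟩
  · rintro ⟨h, hρ, hw, hc⟩
    exact ⟨extensionBracket_skew_iff.mpr ⟨h.skew, hw⟩,
      extensionBracket_jacobi_iff.mpr ⟨h.jacobi, hρ, hc⟩⟩

/-- The coadjoint action `ad*(a)(β) = -β ∘ m a` of a bilinear product `m` on the dual module. -/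
def coadjoint (m : L →ₗ[R] L →ₗ[R] L) : L →ₗ[R] Module.End R (Module.Dual R L) :=
  LinearMap.mk₂ R (fun a β ↦ -(β ∘ₗ m a))
    (fun a a' β ↦ by rw [map_add, LinearMap.comp_add, neg_add])
    (fun r a β ↦ by rw [map_smul, LinearMap.comp_smul, smul_neg])
    (fun a β β' ↦ by rw [LinearMap.add_comp, neg_add])
    (fun r a β ↦ by rw [LinearMap.smul_comp, smul_neg])

theorem coadjoint_apply (a : L) (β : Module.Dual R L) : coadjoint m a β = -(β ∘ₗ m a) :=
  rfl

theorem IsLieBracket.isRepresentation_adjoint (h : IsLieBracket m) : IsRepresentation m m := by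
  intro a b
  ext x
  have jacobi : m a (m b x) + m b (m x a) + m x (m a b) = 0 := h.jacobi a b x
  rw [h.skew x a, h.skew x (m a b), map_neg] at jacobi
  rw [Ring.lie_def, LinearMap.sub_apply, Module.End.mul_apply, Module.End.mul_apply, sub_eq_add_neg]
  exact (add_neg_eq_zero.mp jacobi).symm

theorem IsLieBracket.isRepresentation_coadjoint (h : IsLieBracket m) :
    IsRepresentation m (coadjoint m) := by
  intro a b
  ext β x
  simp only [coadjoint_apply, h.isRepresentation_adjoint a b, Ring.lie_def, LinearMap.sub_apply,
    LinearMap.neg_apply, LinearMap.comp_apply, Module.End.mul_apply, map_sub]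
  abel

theorem stmt6_general (m : L →ₗ[R] L →ₗ[R] L) (w : L →ₗ[R] L →ₗ[R] Module.Dual R L) :
    IsLieBracket (extensionBracket m (coadjoint m) w) ↔
      IsLieBracket m ∧ IsTwoCocycle m (coadjoint m) w := by
  rw [isLieBracket_extensionBracket_iff]
  exact and_congr_right fun h ↦ and_iff_right h.isRepresentation_coadjoint

end Bracket

theorem tStarBr_eq_extensionBracket [Field K] [AddCommGroup B] [Module K B]
    (m : B →ₗ[K] B →ₗ[K] B) (w : B →ₗ[K] B →ₗ[K] Module.Dual K B) (X Y : B × Module.Dual K B) :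
    tStarBr m w X Y = extensionBracket m (coadjoint m) w X Y :=
  rfl

/-- For a skew-symmetric bilinear product `[·,·]_B = m` on a finite-dimensional vector
space `B` and a bilinear map `w : B × B → B*`, the product
`[b+β, b'+β'] = [b,b']_B + w(b,b') + ad*(b)(β') − ad*(b')(β)` makes `B ⊕ B*` a Lie
algebra (skew-symmetric and Jacobi) if and only if `m` makes `B` a Lie algebra and `w`
is a 2-cocycle. -/
theorem stmt6 [Field K] [CharZero K] [AddCommGroup B] [Module K B] [FiniteDimensional K B]
    (m : B →ₗ[K] B →ₗ[K] B) (hmskew : ∀ x y : B, m x y = - m y x)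
    (w : B →ₗ[K] B →ₗ[K] Module.Dual K B) :
    ((∀ X Y : B × Module.Dual K B, tStarBr m w X Y = - tStarBr m w Y X) ∧
     (∀ X Y Z : B × Module.Dual K B,
        tStarBr m w X (tStarBr m w Y Z) + tStarBr m w Y (tStarBr m w Z X) +
          tStarBr m w Z (tStarBr m w X Y) = 0))
    ↔
    ((∀ a b c : B, m a (m b c) + m b (m c a) + m c (m a b) = 0) ∧
     (∀ a b : B, w a b = - w b a) ∧
     (∀ a b c : B, w (m a b) c + w (m b c) a + w (m c a) b =
        -((w b c) ∘ₗ m a) + -((w c a) ∘ₗ m b) + -((w a b) ∘ₗ m c))) := by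
  simp only [tStarBr_eq_extensionBracket, ← coadjoint_apply]
  exact ⟨fun ⟨hs, hJ⟩ ↦ have ⟨hm, hw⟩ := (stmt6_general m w).mp ⟨hs, hJ⟩
      ⟨hm.jacobi, hw.skew, hw.cocycle⟩,
    fun ⟨hJ, hs, hc⟩ ↦ have h := (stmt6_general m w).mpr ⟨⟨hmskew, hJ⟩, hs, hc⟩
      ⟨h.skew, h.jacobi⟩⟩
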